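/- Proposition 2.3: Let 𝕄 be an infinite subset of ℕ, let Ω ⊆ ℂⁿ be an open convex set, let ζ ∈ Ω be fixed, let K ⊆ ℂⁿ be a compact convex set disjoint from Ω, and let (N_j)_{j≥0} be any enumeration (bijection ℕ → ℕⁿ) of ℕⁿ. Then there exists a holomorphic function f on Ω such that: for every holomorphic polynomial P on ℂⁿ there exists a sequence (λ_N)_{N≥1} with λ_N ∈ 𝕄 for all N, such that S_{λ_N}(f,ζ) → P uniformly on K as N → ∞, and S_{λ_N}(f,ζ) → f uniformly on each compact subset of Ω as N → ∞. Moreover, the set of all such functions f is a dense G_δ subset of O(Ω), where O(Ω) is the space of holomorphic functions on Ω with the topology of uniform convergence on compact subsets of Ω. -/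

import Mathlib

open Set Filter Topology

noncomputable section

/-- Evaluation of a multivariate polynomial as a function on `ℂⁿ = Fin n → ℂ`. -/
def mvEval {n : ℕ} (p : MvPolynomial (Fin n) ℂ) : (Fin n → ℂ) → ℂ :=
  fun z => MvPolynomial.eval z p

/-- The polynomially convex hull of a set in `ℂⁿ`. -/
def polyHull {n : ℕ} (K : Set (Fin n → ℂ)) : Set (Fin n → ℂ) :=
  {z | ∀ p : MvPolynomial (Fin n) ℂ, ‖mvEval p z‖ ≤ sSup ((fun w => ‖mvEval p w‖) '' K)}

/-- A set in `ℂⁿ` is polynomially convex if it equals its polynomially convex hull. -/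
def IsPolyConvex {n : ℕ} (K : Set (Fin n → ℂ)) : Prop := polyHull K = K

/-- The polynomially convex hull of a subset of `ℂ`. -/
def polyHull1 (F : Set ℂ) : Set ℂ :=
  {z | ∀ p : Polynomial ℂ, ‖p.eval z‖ ≤ sSup ((fun w => ‖p.eval w‖) '' F)}

/-- A subset of `ℂ` is polynomially convex if it equals its polynomially convex hull. -/
def IsPolyConvex1 (F : Set ℂ) : Prop := polyHull1 F = F

/-- Partial derivative in the `i`-th coordinate direction. -/
def pd {n : ℕ} (i : Fin n) (f : (Fin n → ℂ) → ℂ) : (Fin n → ℂ) → ℂ :=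
  fun z => fderiv ℂ f z (Pi.single i 1)

/-- Iterated partial derivative `D^ℓ = ∂^{ℓ₁+⋯+ℓₙ}/∂z₁^{ℓ₁}⋯∂zₙ^{ℓₙ}`. -/
def Dml {n : ℕ} (ℓ : Fin n → ℕ) (f : (Fin n → ℂ) → ℂ) : (Fin n → ℂ) → ℂ :=
  (List.finRange n).foldr (fun i g => (pd i)^[ℓ i] g) f

/-- Partial sums `S_λ` of a Taylor-type series around `ζ`, with coefficients computed from a
given family `g` of (extended) partial derivatives: the coefficient of the monomial
`(z-ζ)^{N_j}` is `g (N_j) ζ / (N_{j,1}! ⋯ N_{j,n}!)`. -/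
def pSumExt {n : ℕ} (Nj : ℕ → Fin n → ℕ) (g : (Fin n → ℕ) → (Fin n → ℂ) → ℂ)
    (ζ : Fin n → ℂ) (lam : ℕ) : (Fin n → ℂ) → ℂ :=
  fun z => ∑ j ∈ Finset.range (lam + 1),
    (((∏ i, Nat.factorial (Nj j i) : ℕ) : ℂ))⁻¹ * g (Nj j) ζ * ∏ i, (z i - ζ i) ^ (Nj j i)

/-- Partial sums `S_λ(f,ζ)` of the Taylor development of `f` around `ζ`. -/
def pSum {n : ℕ} (Nj : ℕ → Fin n → ℕ) (f : (Fin n → ℂ) → ℂ)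
    (ζ : Fin n → ℂ) (lam : ℕ) : (Fin n → ℂ) → ℂ :=
  pSumExt Nj (fun ℓ => Dml ℓ f) ζ lam

/-- The space `O(Ω)` of holomorphic functions on `Ω`. -/
def Ospace (n : ℕ) (Ω : Set (Fin n → ℂ)) : Type :=
  {f : (Fin n → ℂ) → ℂ // DifferentiableOn ℂ f Ω}

/-- Topology of uniform convergence on compact subsets of `Ω` on `O(Ω)` (the compact-open
topology induced via restriction to `Ω`). -/
instance (n : ℕ) (Ω : Set (Fin n → ℂ)) : TopologicalSpace (Ospace n Ω) :=
  TopologicalSpace.induced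
    (fun f : Ospace n Ω =>
      (⟨Ω.restrict f.1, continuousOn_iff_continuous_restrict.mp f.2.continuousOn⟩ : C(Ω, ℂ)))
    inferInstance

/-- Membership in `A^∞(Ω)`: `f` is holomorphic on `Ω` and each partial derivative `D^ℓ f`
extends continuously to the closure of `Ω`. -/
def AinfMem (n : ℕ) (Ω : Set (Fin n → ℂ)) (f : (Fin n → ℂ) → ℂ) : Prop :=
  DifferentiableOn ℂ f Ω ∧
    ∀ ℓ : Fin n → ℕ, ∃ g : (Fin n → ℂ) → ℂ,
      ContinuousOn g (closure Ω) ∧ Set.EqOn g (Dml ℓ f) Ω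

/-- The space `A^∞(Ω)`. -/
def AinfSpace (n : ℕ) (Ω : Set (Fin n → ℂ)) : Type :=
  {f : (Fin n → ℂ) → ℂ // AinfMem n Ω f}

/-- The chosen continuous extension of `D^ℓ f` to the closure of `Ω`, for `f ∈ A^∞(Ω)`.
(Its restriction to the closure of `Ω` is uniquely determined.) -/
def AinfExt {n : ℕ} {Ω : Set (Fin n → ℂ)} (f : AinfSpace n Ω) (ℓ : Fin n → ℕ) :
    (Fin n → ℂ) → ℂ :=
  Classical.choose (f.2.2 ℓ)

lemma AinfExt_continuousOn {n : ℕ} {Ω : Set (Fin n → ℂ)} (f : AinfSpace n Ω) (ℓ : Fin n → ℕ) :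
    ContinuousOn (AinfExt f ℓ) (closure Ω) :=
  (Classical.choose_spec (f.2.2 ℓ)).1

lemma AinfExt_eqOn {n : ℕ} {Ω : Set (Fin n → ℂ)} (f : AinfSpace n Ω) (ℓ : Fin n → ℕ) :
    Set.EqOn (AinfExt f ℓ) (Dml ℓ f.1) Ω :=
  (Classical.choose_spec (f.2.2 ℓ)).2

/-- Topology on `A^∞(Ω)`: uniform convergence of every partial derivative on every compact
subset of the closure of `Ω`. -/
instance (n : ℕ) (Ω : Set (Fin n → ℂ)) : TopologicalSpace (AinfSpace n Ω) :=
  TopologicalSpace.induced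
    (fun f : AinfSpace n Ω => fun ℓ : Fin n → ℕ =>
      (⟨(closure Ω).restrict (AinfExt f ℓ),
        continuousOn_iff_continuous_restrict.mp (AinfExt_continuousOn f ℓ)⟩ :
          C(closure Ω, ℂ)))
    inferInstance

/-- A smooth compact curve in `ℂⁿ`: the image of an injective `C^∞` map with
nowhere-vanishing derivative, defined on a compact interval (an arc) or on the
circle (a closed curve, modelled by a 1-periodic map). -/
def IsSmoothCompactCurve {n : ℕ} (K : Set (Fin n → ℂ)) : Prop :=
  ∃ γ : ℝ → (Fin n → ℂ), ContDiff ℝ (⊤ : ℕ∞) γ ∧ (∀ t, deriv γ t ≠ 0) ∧ K = γ '' Set.Icc 0 1 ∧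
    (Set.InjOn γ (Set.Icc 0 1) ∨ (Function.Periodic γ 1 ∧ Set.InjOn γ (Set.Ico 0 1)))

/-- A disjoint union of finitely many smooth compact curves. -/
def IsFiniteUnionOfSmoothCurves {n : ℕ} (K : Set (Fin n → ℂ)) : Prop :=
  ∃ (m : ℕ) (C : Fin m → Set (Fin n → ℂ)),
    (∀ i, IsSmoothCompactCurve (C i)) ∧ Pairwise (Function.onFun Disjoint C) ∧ K = ⋃ i, C i

/-!
The sets of `f ∈ O(Ω)` for which some `S_k(f, ζ)`, `k ∈ 𝕄`, is close to a given polynomial on `K`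
and close to `f` on a given compact subset of `Ω` are open, because `S_k(f, ζ)` depends
continuously on `f`; the universal functions are a countable intersection of such sets, so by
Baire's theorem it is enough that each of them is dense. Since a polynomial coincides with its
partial sums of high order, density is a Runge-type statement: one polynomial can approximate `f`
on a compact `L ⊆ Ω` and a polynomial `p` on `K`. Expanding `f (z₀ + r • (z - z₀))` in powers of
`r` and continuing from `r = 0` to `r = 1` approximates `f` on `L` by a polynomial `q`. A real
hyperplane separates `L` from `K`, giving an affine function `a` with `Re a < 0` on `L` and
`0 < Re a` on `K`. The logistic function `1 / (1 + exp (m a))` is a uniform limit of polynomials on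
`L ∪ K` and tends to `1` on `L` and to `0` on `K` as `m → ∞`, so it glues `q` and `p`.
-/

section Holomorphic

open Metric

variable {E F ι : Type*} [NormedAddCommGroup E] [NormedSpace ℂ E]
  [NormedAddCommGroup F] [NormedSpace ℂ F] {l : Filter ι}

lemma norm_fderiv_le_of_forall_mem_ball {f : E → F} {c : E} {r C : ℝ} (hr : 0 < r)
    (hf : DifferentiableOn ℂ f (ball c r)) (hC : ∀ z ∈ ball c r, ‖f z‖ ≤ C) :
    ‖fderiv ℂ f c‖ ≤ 2 * C / r := by
  refine Complex.norm_fderiv_le_div_of_mapsTo_ball hf (fun z hz => ?_) hr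
  rw [mem_closedBall, dist_eq_norm]
  linarith [norm_sub_le (f z) (f c), hC z hz, hC c (mem_ball_self hr)]

lemma dist_fderiv_le_of_forall_mem_ball {f g : E → F} {c : E} {r C : ℝ} (hr : 0 < r)
    (hf : DifferentiableOn ℂ f (ball c r)) (hg : DifferentiableOn ℂ g (ball c r))
    (hC : ∀ z ∈ ball c r, dist (f z) (g z) ≤ C) :
    dist (fderiv ℂ f c) (fderiv ℂ g c) ≤ 2 * C / r := by
  have hc : ball c r ∈ 𝓝 c := ball_mem_nhds c hr
  rw [dist_eq_norm, ← fderiv_sub (hf.differentiableAt hc) (hg.differentiableAt hc)]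
  refine norm_fderiv_le_of_forall_mem_ball hr (hf.sub hg) fun z hz => ?_
  rw [Pi.sub_apply, ← dist_eq_norm]
  exact hC z hz

lemma tendstoUniformlyOn_fderiv {Φ : ι → E → F} {f : E → F} {s : Set E} {r : ℝ} (hr : 0 < r)
    (hΦ : ∀ᶠ i in l, DifferentiableOn ℂ (Φ i) (thickening r s))
    (hf : DifferentiableOn ℂ f (thickening r s))
    (hlim : TendstoUniformlyOn Φ f l (thickening r s)) :
    TendstoUniformlyOn (fun i => fderiv ℂ (Φ i)) (fderiv ℂ f) l s := by
  rw [Metric.tendstoUniformlyOn_iff] at hlim ⊢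
  intro ε hε
  filter_upwards [hΦ, hlim (r * ε / 4) (by positivity)] with i hi hclose c hc
  have hsub : ball c r ⊆ thickening r s := ball_subset_thickening hc r
  refine (dist_fderiv_le_of_forall_mem_ball hr (hf.mono hsub) (hi.mono hsub)
    fun z hz => (hclose z (hsub hz)).le).trans_lt ?_
  rw [div_lt_iff₀ hr]
  nlinarith

lemma uniformCauchySeqOn_fderiv {Φ : ι → E → F} {s : Set E} {r : ℝ} (hr : 0 < r)
    (hΦ : ∀ᶠ i in l, DifferentiableOn ℂ (Φ i) (thickening r s))
    (hC : UniformCauchySeqOn Φ l (thickening r s)) :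
    UniformCauchySeqOn (fun i => fderiv ℂ (Φ i)) l s := by
  intro u hu
  obtain ⟨ε, hε, hεu⟩ := mem_uniformity_dist.1 hu
  filter_upwards [hΦ.prod_mk hΦ, hC _ (dist_mem_uniformity (show 0 < r * ε / 4 by positivity))]
    with i hi hclose c hc
  have hsub : ball c r ⊆ thickening r s := ball_subset_thickening hc r
  refine hεu ((dist_fderiv_le_of_forall_mem_ball hr (hi.1.mono hsub) (hi.2.mono hsub)
    fun z hz => (hclose z (hsub hz)).le).trans_lt ?_)
  rw [div_lt_iff₀ hr]
  nlinarith

lemma differentiableAt_of_tendstoUniformlyOn_ball [CompleteSpace F] [NeBot l] {Φ : ι → E → F}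
    {f : E → F} {c : E} {r : ℝ} (hr : 0 < r) (hΦ : ∀ᶠ i in l, DifferentiableOn ℂ (Φ i) (ball c r))
    (hlim : TendstoUniformlyOn Φ f l (ball c r)) : DifferentiableAt ℂ f c := by
  have hthick : thickening (r / 2) (ball c (r / 2)) ⊆ ball c r := by
    simpa using thickening_ball c (r / 2) (r / 2)
  have hC : UniformCauchySeqOn (fun i => fderiv ℂ (Φ i)) l (ball c (r / 2)) :=
    uniformCauchySeqOn_fderiv (half_pos hr) (hΦ.mono fun i hi => hi.mono hthick)
      (hlim.uniformCauchySeqOn.mono hthick)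
  have hball : ball c (r / 2) ∈ 𝓝 c := ball_mem_nhds c (half_pos hr)
  have hderiv : TendstoUniformlyOn (fun i => fderiv ℂ (Φ i))
      (fun z => lim (map (fun i => fderiv ℂ (Φ i) z) l)) l (ball c (r / 2)) :=
    hC.tendstoUniformlyOn_of_tendsto fun z hz => (hC.cauchy_map hz).le_nhds_lim
  refine (hasFDerivAt_of_tendstoUniformlyOnFilter (f := Φ)
    (hderiv.tendstoUniformlyOnFilter.mono_right (le_principal_iff.2 hball)) ?_
    ?_).differentiableAt
  · filter_upwards [hΦ.prod_mk (ball_mem_nhds c hr)] with p hp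
    exact (hp.1.differentiableAt (isOpen_ball.mem_nhds hp.2)).hasFDerivAt
  · filter_upwards [ball_mem_nhds c hr] with z hz
    exact hlim.tendsto_at hz

lemma differentiableOn_of_tendstoLocallyUniformlyOn [LocallyCompactSpace E] [CompleteSpace F]
    [NeBot l] {Φ : ι → E → F} {f : E → F} {U : Set E} (hU : IsOpen U)
    (hΦ : ∀ᶠ i in l, DifferentiableOn ℂ (Φ i) U) (hlim : TendstoLocallyUniformlyOn Φ f l U) :
    DifferentiableOn ℂ f U := by
  intro c hc
  obtain ⟨K, hK, hcK, hKU⟩ := exists_compact_subset hU hc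
  obtain ⟨r, hr, hrK⟩ := Metric.mem_nhds_iff.1 (mem_interior_iff_mem_nhds.1 hcK)
  refine (differentiableAt_of_tendstoUniformlyOn_ball hr
    (hΦ.mono fun i hi => hi.mono (hrK.trans hKU)) ?_).differentiableWithinAt
  exact ((tendstoLocallyUniformlyOn_iff_forall_isCompact hU).1 hlim K hKU hK).mono hrK

lemma tendstoLocallyUniformlyOn_fderiv [ProperSpace E] {Φ : ι → E → F} {f : E → F} {U : Set E}
    (hU : IsOpen U) (hΦ : ∀ᶠ i in l, DifferentiableOn ℂ (Φ i) U) (hf : DifferentiableOn ℂ f U)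
    (hlim : TendstoLocallyUniformlyOn Φ f l U) :
    TendstoLocallyUniformlyOn (fun i => fderiv ℂ (Φ i)) (fderiv ℂ f) l U := by
  rw [tendstoLocallyUniformlyOn_iff_forall_isCompact hU] at hlim ⊢
  intro K hKU hK
  obtain ⟨r, hr, hrU⟩ := hK.exists_cthickening_subset_open hU hKU
  have hsub : thickening r K ⊆ U := (thickening_subset_cthickening r K).trans hrU
  exact tendstoUniformlyOn_fderiv hr (hΦ.mono fun i hi => hi.mono hsub) (hf.mono hsub)
    ((hlim _ hrU hK.cthickening).mono (thickening_subset_cthickening r K))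

lemma norm_sub_sub_fderiv_le_of_forall_mem_ball {f : E → F} {c z : E} {r C : ℝ}
    (hf : DifferentiableOn ℂ f (ball c r)) (hC : ∀ w ∈ ball c r, ‖f w‖ ≤ C) (hz : z ∈ ball c r) :
    ‖f z - f c - fderiv ℂ f c (z - c)‖ ≤ 4 * C * (‖z - c‖ / r) ^ 2 := by
  have hr : 0 < r := nonempty_ball.1 ⟨z, hz⟩
  have hfc : DifferentiableAt ℂ f c := hf.differentiableAt (ball_mem_nhds c hr)
  have hder := norm_fderiv_le_of_forall_mem_ball hr hf hC
  set R : E → F := fun w => f w - fderiv ℂ f c (w - c)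
  have hmaps : MapsTo R (ball c r) (closedBall (R c) (4 * C)) := by
    intro w hw
    have hlin : ‖fderiv ℂ f c (w - c)‖ ≤ 2 * C := by
      refine ((fderiv ℂ f c).le_of_opNorm_le_of_le hder (mem_ball_iff_norm.1 hw).le).trans_eq ?_
      field_simp
    rw [mem_closedBall, dist_eq_norm]
    calc ‖R w - R c‖ = ‖f w - f c - fderiv ℂ f c (w - c)‖ := by simp [R, sub_right_comm]
      _ ≤ ‖f w‖ + ‖f c‖ + ‖fderiv ℂ f c (w - c)‖ :=
        (norm_sub_le _ _).trans (by gcongr; exact norm_sub_le _ _)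
      _ ≤ 4 * C := by linarith [hC w hw, hC c (mem_ball_self hr)]
  have hlittle : (R · - R c) =o[𝓝 c] fun w => ‖w - c‖ ^ 1 := by
    simpa [R, sub_right_comm] using hfc.hasFDerivAt.isLittleO.norm_right
  simpa [R, dist_eq_norm, sub_right_comm] using
    Complex.dist_le_mul_div_pow_of_mapsTo_ball_of_isLittleO (hf.sub (by fun_prop)) hmaps hlittle hz

lemma tendstoUniformlyOn_slope_fderiv_apply {f : E → F} {c : E} {r C : ℝ} (hr : 0 < r)
    (hf : DifferentiableOn ℂ f (ball c (2 * r))) (hC : ∀ z ∈ ball c (2 * r), ‖f z‖ ≤ C) (v : E) :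
    TendstoUniformlyOn (fun (t : ℂ) z => t⁻¹ • (f (z + t • v) - f z))
      (fun z => fderiv ℂ f z v) (𝓝[≠] 0) (ball c r) := by
  rw [Metric.tendstoUniformlyOn_iff]
  intro ε hε
  have hsmall : ∀ᶠ t : ℂ in 𝓝[≠] 0, ‖t • v‖ < r ∧ 4 * C * (‖v‖ / r) ^ 2 * ‖t‖ < ε := by
    refine nhdsWithin_le_nhds (Eventually.and ?_ ?_)
    · exact (show Continuous fun t : ℂ => ‖t • v‖ by fun_prop).tendsto' 0 0 (by simp)
        |>.eventually_lt_const hr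
    · exact (show Continuous fun t : ℂ => 4 * C * (‖v‖ / r) ^ 2 * ‖t‖ by fun_prop).tendsto' 0 0
        (by simp) |>.eventually_lt_const hε
  filter_upwards [hsmall, self_mem_nhdsWithin] with t ⟨htv, htε⟩ (ht : t ≠ 0) z hz
  have hsub : ball z r ⊆ ball c (2 * r) := ball_subset_ball' (by linarith [mem_ball.1 hz])
  have hremainder := norm_sub_sub_fderiv_le_of_forall_mem_ball (z := z + t • v) (hf.mono hsub)
    (fun w hw => hC w (hsub hw)) (by simpa using htv)
  rw [dist_comm, dist_eq_norm]
  calc ‖t⁻¹ • (f (z + t • v) - f z) - fderiv ℂ f z v‖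
      = ‖t‖⁻¹ * ‖f (z + t • v) - f z - fderiv ℂ f z (z + t • v - z)‖ := by
        rw [← norm_inv, ← norm_smul, add_sub_cancel_left, map_smul, smul_sub _ (_ - _),
          inv_smul_smul₀ ht]
    _ ≤ ‖t‖⁻¹ * (4 * C * (‖z + t • v - z‖ / r) ^ 2) := by gcongr
    _ = 4 * C * (‖v‖ / r) ^ 2 * ‖t‖ := by
        rw [add_sub_cancel_left, norm_smul]
        field_simp [norm_ne_zero_iff.2 ht]
    _ < ε := htε

lemma differentiableOn_fderiv_apply [CompleteSpace F] {f : E → F} {U : Set E} (hU : IsOpen U)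
    (hf : DifferentiableOn ℂ f U) (v : E) : DifferentiableOn ℂ (fun z => fderiv ℂ f z v) U := by
  intro c hc
  have hbound : ∀ᶠ z in 𝓝 c, ‖f z‖ < ‖f c‖ + 1 :=
    (hf.continuousOn.continuousAt (hU.mem_nhds hc)).norm.eventually_lt_const (lt_add_one _)
  obtain ⟨R, hR, hball⟩ := eventually_nhds_iff_ball.1 ((hU.eventually_mem hc).and hbound)
  obtain ⟨r, rfl⟩ : ∃ r, R = 2 * r := ⟨R / 2, by ring⟩
  have hr : 0 < r := by linarith
  have hfball : DifferentiableOn ℂ f (ball c (2 * r)) := hf.mono fun z hz => (hball z hz).1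
  refine (differentiableAt_of_tendstoUniformlyOn_ball hr ?_
    (tendstoUniformlyOn_slope_fderiv_apply hr hfball (fun z hz => (hball z hz).2.le) v)
    ).differentiableWithinAt
  have hsmall : ∀ᶠ t : ℂ in 𝓝[≠] 0, ‖t • v‖ < r :=
    nhdsWithin_le_nhds <| (show Continuous fun t : ℂ => ‖t • v‖ by fun_prop).tendsto' 0 0 (by simp)
      |>.eventually_lt_const hr
  filter_upwards [hsmall] with t ht
  have hshift : MapsTo (fun z => z + t • v) (ball c r) (ball c (2 * r)) := fun z hz => by
    rw [mem_ball_iff_norm] at hz ⊢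
    calc ‖z + t • v - c‖ = ‖(z - c) + t • v‖ := by congr 1; abel
      _ < 2 * r := by linarith [norm_add_le (z - c) (t • v)]
  exact ((hfball.comp (by fun_prop) hshift).sub
    (hfball.mono (ball_subset_ball (by linarith)))).const_smul t⁻¹

end Holomorphic

section TaylorPolynomial

open MvPolynomial

variable {n : ℕ}

lemma mvEval_C (a : ℂ) : mvEval (C a : MvPolynomial (Fin n) ℂ) = fun _ => a :=
  funext fun _ => eval_C a

lemma mvEval_X (i : Fin n) : mvEval (X i) = fun z => z i :=
  funext fun _ => eval_X i

lemma mvEval_add (p q : MvPolynomial (Fin n) ℂ) : mvEval (p + q) = mvEval p + mvEval q :=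
  funext fun _ => eval_add

lemma mvEval_mul (p q : MvPolynomial (Fin n) ℂ) : mvEval (p * q) = mvEval p * mvEval q :=
  funext fun _ => eval_mul

lemma differentiable_mvEval (p : MvPolynomial (Fin n) ℂ) : Differentiable ℂ (mvEval p) :=
  differentiableOn_univ.1 (AnalyticOnNhd.eval_mvPolynomial p).differentiableOn

lemma pd_mvEval (i : Fin n) (p : MvPolynomial (Fin n) ℂ) :
    pd i (mvEval p) = mvEval (pderiv i p) := by
  induction p using MvPolynomial.induction_on with
  | C a => ext z; rw [mvEval_C, pd, pderiv_C, ← C_0, mvEval_C, fderiv_fun_const]; rfl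
  | add p q hp hq =>
    ext z
    rw [map_add, mvEval_add, mvEval_add, ← hp, ← hq, pd,
      fderiv_add (differentiable_mvEval p z) (differentiable_mvEval q z)]
    rfl
  | mul_X p j hp =>
    ext z
    have hX : HasFDerivAt (mvEval (X j)) (ContinuousLinearMap.proj (R := ℂ) j) z := by
      rw [mvEval_X]
      exact hasFDerivAt_apply j z
    have hmul := congr($(((differentiable_mvEval p z).hasFDerivAt.mul hX).fderiv) (Pi.single i 1))
    rw [mvEval_mul, Derivation.leibniz, smul_eq_mul, smul_eq_mul, pderiv_X, mvEval_add,
      mvEval_mul, mvEval_mul, ← hp, pd, hmul]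
    rcases eq_or_ne i j with rfl | hij
    · simp [pd, mvEval]
    · simp [pd, mvEval, hij]

lemma pd_mvEval_sub (i : Fin n) (p : MvPolynomial (Fin n) ℂ) (ζ : Fin n → ℂ) :
    pd i (fun z => mvEval p (z - ζ)) = fun z => mvEval (pderiv i p) (z - ζ) := by
  ext z
  rw [← pd_mvEval, pd, pd, fderiv_comp_sub]

lemma iterate_pd_mvEval_sub (i : Fin n) (k : ℕ) (p : MvPolynomial (Fin n) ℂ) (ζ : Fin n → ℂ) :
    (pd i)^[k] (fun z => mvEval p (z - ζ)) = fun z => mvEval ((pderiv i)^[k] p) (z - ζ) := by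
  induction k with
  | zero => rfl
  | succ k ih => rw [Function.iterate_succ_apply', ih, pd_mvEval_sub, Function.iterate_succ_apply']

lemma foldr_iterate_pd_mvEval_sub (ℓ : Fin n → ℕ) (is : List (Fin n))
    (p : MvPolynomial (Fin n) ℂ) (ζ : Fin n → ℂ) :
    is.foldr (fun i g => (pd i)^[ℓ i] g) (fun z => mvEval p (z - ζ)) =
      fun z => mvEval (is.foldr (fun i q => (pderiv i)^[ℓ i] q) p) (z - ζ) := by
  induction is with
  | nil => rfl
  | cons i is ih => rw [List.foldr_cons, ih, iterate_pd_mvEval_sub, List.foldr_cons]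

lemma coeff_iterate_pderiv {σ R : Type*} [CommSemiring R] (i : σ) (k : ℕ) (p : MvPolynomial σ R)
    (m : σ →₀ ℕ) :
    coeff m ((pderiv i)^[k] p) =
      coeff (m + Finsupp.single i k) p * ((m i + 1).ascFactorial k : ℕ) := by
  induction k generalizing m with
  | zero => simp
  | succ k ih =>
    have hasc : ((m i + 1 + 1).ascFactorial k * (m i + 1) : R) =
        (m i + 1).ascFactorial (k + 1) := by
      rw [Nat.ascFactorial_succ, ← Nat.succ_ascFactorial]
      push_cast
      ring
    rw [Function.iterate_succ_apply', coeff_pderiv, ih, add_assoc, ← Finsupp.single_add,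
      add_comm 1 k, Finsupp.add_apply, Finsupp.single_eq_same, mul_assoc, hasc]

lemma coeff_foldr_iterate_pderiv {σ R : Type*} [CommSemiring R] (p : MvPolynomial σ R)
    (ℓ : σ → ℕ) {is : List σ} (his : is.Nodup) {m : σ →₀ ℕ} (hm : ∀ i ∈ is, m i = 0) :
    coeff m (is.foldr (fun i q => (pderiv i)^[ℓ i] q) p) =
      coeff (m + (is.map fun i => Finsupp.single i (ℓ i)).sum) p *
        ((is.map fun i => (ℓ i).factorial).prod : ℕ) := by
  induction is generalizing m with
  | nil => simp
  | cons i is ih =>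
    obtain ⟨hi, his⟩ := List.nodup_cons.1 his
    have hm' : ∀ j ∈ is, (m + Finsupp.single i (ℓ i)) j = 0 := fun j hj => by
      simp [hm j (List.mem_cons_of_mem i hj), ne_of_mem_of_not_mem hj hi]
    rw [List.foldr_cons, coeff_iterate_pderiv, ih his hm', hm i List.mem_cons_self, zero_add,
      Nat.one_ascFactorial, List.map_cons, List.sum_cons, List.map_cons, List.prod_cons, add_assoc,
      mul_assoc, ← Nat.cast_mul, mul_comm (Nat.factorial _)]

lemma Dml_mvEval_sub_self (ℓ : Fin n → ℕ) (p : MvPolynomial (Fin n) ℂ) (ζ : Fin n → ℂ) :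
    Dml ℓ (fun z => mvEval p (z - ζ)) ζ =
      coeff (Finsupp.equivFunOnFinite.symm ℓ) p * (∏ i, (ℓ i).factorial : ℕ) := by
  have hsum : ∑ i, Finsupp.single i (ℓ i) = Finsupp.equivFunOnFinite.symm ℓ := by
    ext i
    simp [Finsupp.finsetSum_apply, Finsupp.single_apply]
  have heval (q : MvPolynomial (Fin n) ℂ) : mvEval q 0 = coeff 0 q := by
    rw [mvEval, ← constantCoeff_eq, eval_zero]
  simp only [Dml, foldr_iterate_pd_mvEval_sub, sub_self]
  rw [heval, coeff_foldr_iterate_pderiv p ℓ (List.nodup_finRange n) (by simp), zero_add,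
    ← Fin.sum_univ_def, ← Fin.prod_univ_def, hsum]

lemma exists_mvEval_sub_eq (p : MvPolynomial (Fin n) ℂ) (ζ : Fin n → ℂ) :
    ∃ q : MvPolynomial (Fin n) ℂ, mvEval p = fun z => mvEval q (z - ζ) := by
  refine ⟨bind₁ (fun i => X i + C (ζ i)) p, funext fun z => ?_⟩
  have hcomp := aeval_bind₁ (R := ℂ) (z - ζ) (fun i => X i + C (ζ i)) p
  simpa [mvEval, aeval_eq_eval] using hcomp.symm

lemma eventually_sum_range_eq_eval {σ R : Type*} [Fintype σ] [CommSemiring R] {e : ℕ → σ →₀ ℕ}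
    (he : Function.Bijective e) (p : MvPolynomial σ R) :
    ∀ᶠ k in atTop, ∀ z : σ → R,
      ∑ j ∈ Finset.range k, coeff (e j) p * ∏ i, z i ^ e j i = eval z p := by
  classical
  have hsupport : ∀ᶠ k in atTop, ∀ d ∈ p.support, d ∈ (Finset.range k).image e := by
    refine (Finset.eventually_all p.support).2 fun d _ => ?_
    obtain ⟨j, rfl⟩ := he.2 d
    filter_upwards [eventually_gt_atTop j] with k hk
    exact Finset.mem_image_of_mem e (Finset.mem_range.2 hk)
  filter_upwards [hsupport] with k hk z
  rw [eval_eq', ← Finset.sum_image (f := fun d => coeff d p * ∏ i, z i ^ d i) he.1.injOn]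
  refine (Finset.sum_subset hk fun d _ hd => ?_).symm
  rw [notMem_support_iff.1 hd, zero_mul]

lemma eventually_pSum_mvEval_eq {Nj : ℕ → Fin n → ℕ} (hNj : Function.Bijective Nj)
    (p : MvPolynomial (Fin n) ℂ) (ζ : Fin n → ℂ) :
    ∀ᶠ k in atTop, pSum Nj (mvEval p) ζ k = mvEval p := by
  obtain ⟨q, hq⟩ := exists_mvEval_sub_eq p ζ
  have he := Finsupp.equivFunOnFinite.symm.bijective.comp hNj
  filter_upwards [(tendsto_add_atTop_nat 1).eventually (eventually_sum_range_eq_eval he q)]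
    with k hk
  ext z
  rw [hq]
  refine (Finset.sum_congr rfl fun j _ => ?_).trans (hk (z - ζ))
  have hfact : ((∏ i, (Nj j i).factorial : ℕ) : ℂ) ≠ 0 :=
    Nat.cast_ne_zero.2 (Finset.prod_ne_zero_iff.2 fun i _ => Nat.factorial_ne_zero _)
  beta_reduce
  rw [Dml_mvEval_sub_self, mul_comm (coeff _ _), inv_mul_cancel_left₀ hfact]
  rfl

end TaylorPolynomial

section Dilation

open Metric

lemma hasDerivAt_of_forall_hasDerivAt_apply {𝕜 X F : Type*} [RCLike 𝕜] [TopologicalSpace X]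
    [CompactSpace X] [NormedAddCommGroup F] [NormedSpace 𝕜 F] {φ φ' : 𝕜 → C(X, F)} {r : 𝕜}
    (hφ : ∀ᶠ s in 𝓝 r, ∀ x, HasDerivAt (fun t => φ t x) (φ' s x) s) (hφ' : ContinuousAt φ' r) :
    HasDerivAt φ (φ' r) r := by
  rw [hasDerivAt_iff_isLittleO, Asymptotics.isLittleO_iff]
  intro ε hε
  obtain ⟨δ, hδ, hball⟩ := eventually_nhds_iff_ball.1 (hφ.and (hφ'.eventually (ball_mem_nhds _ hε)))
  filter_upwards [ball_mem_nhds r hδ] with s hs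
  refine (ContinuousMap.norm_le _ (by positivity)).2 fun x => ?_
  have hderiv : ∀ t ∈ ball r δ, HasDerivWithinAt (fun t => φ t x - t • φ' r x)
      (φ' t x - φ' r x) (ball r δ) t := fun t ht => by
    simpa using
      (((hball t ht).1 x).fun_sub ((hasDerivAt_id t).smul_const (φ' r x))).hasDerivWithinAt
  have hsmall : ∀ t ∈ ball r δ, ‖φ' t x - φ' r x‖ ≤ ε := fun t ht => by
    rw [← dist_eq_norm]
    exact (ContinuousMap.dist_apply_le_dist x).trans (hball t ht).2.le
  have hmv := (convex_ball r δ).norm_image_sub_le_of_norm_hasDerivWithin_le hderiv hsmall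
    (mem_ball_self hδ) hs
  simpa [sub_smul, sub_sub_sub_comm] using hmv

lemma mem_of_forall_iteratedDeriv_mem {F : Type*} [NormedAddCommGroup F] [NormedSpace ℂ F]
    [CompleteSpace F] {φ : ℂ → F} {U : Set ℂ} (hU : IsOpen U) (hUc : IsPreconnected U)
    (hφ : DifferentiableOn ℂ φ U) {z₀ : ℂ} (hz₀ : z₀ ∈ U) {S : Submodule ℂ F}
    (hS : IsClosed (S : Set F)) (hderiv : ∀ k, iteratedDeriv k φ z₀ ∈ S) {z : ℂ} (hz : z ∈ U) :
    φ z ∈ S := by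
  obtain ⟨ρ, hρ, hball⟩ := Metric.isOpen_iff.1 hU z₀ hz₀
  have hlocal : S.mkQL ∘ φ =ᶠ[𝓝 z₀] 0 := by
    filter_upwards [ball_mem_nhds z₀ hρ] with w hw
    have hw' : φ w ∈ S := hS.mem_of_tendsto
      (Complex.hasSum_taylorSeries_on_ball (hφ.mono hball) hw) <| Eventually.of_forall fun s =>
        S.sum_mem fun k _ => S.smul_mem _ (S.smul_mem _ (hderiv k))
    simpa using hw'
  simpa using (S.mkQL.comp_analyticOnNhd (hφ.analyticOnNhd hU)
    ).eqOn_zero_of_preconnected_of_eventuallyEq_zero hUc hz₀ hlocal hz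

variable {E F : Type*} [NormedAddCommGroup E] [NormedSpace ℂ E]

/-- The parameters `r` for which the dilation `z ↦ ζ + r • (z - ζ)` maps `L` into `U`. -/
def dilationParams (U L : Set E) (ζ : E) : Set ℂ :=
  {r | ∀ z ∈ L, ζ + r • (z - ζ) ∈ U}

lemma isOpen_dilationParams {U L : Set E} (hU : IsOpen U) (hL : IsCompact L) (ζ : E) :
    IsOpen (dilationParams U L ζ) := by
  refine isOpen_iff_eventually.2 fun r hr =>
    hL.eventually_forall_of_forall_eventually fun z hz => ?_
  have hcont : Continuous fun p : ℂ × E => ζ + p.1 • (p.2 - ζ) := by fun_prop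
  exact hcont.continuousAt.eventually (hU.mem_nhds (hr z hz))

lemma convex_dilationParams [NormedSpace ℝ E] [IsScalarTower ℝ ℂ E] {U : Set E} (hU : Convex ℝ U)
    (L : Set E) (ζ : E) : Convex ℝ (dilationParams U L ζ) := by
  intro r hr s hs a b ha hb hab z hz
  have hcomb : ζ + (a • r + b • s) • (z - ζ) =
      a • (ζ + r • (z - ζ)) + b • (ζ + s • (z - ζ)) := by
    rw [add_smul, smul_assoc, smul_assoc, smul_add, smul_add, add_add_add_comm,
      ← add_smul a b ζ, hab, one_smul]
  exact hcomb ▸ hU (hr z hz) (hs z hz) ha hb hab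

lemma zero_mem_dilationParams {U : Set E} {ζ : E} (hζ : ζ ∈ U) (L : Set E) :
    0 ∈ dilationParams U L ζ := fun z _ => by simpa using hζ

lemma one_mem_dilationParams {U L : Set E} (hLU : L ⊆ U) (ζ : E) :
    1 ∈ dilationParams U L ζ := fun z hz => by simpa using hLU hz

variable [TopologicalSpace F] [Zero F] {f : E → F} {U L : Set E} {ζ : E}

/-- The restriction to `L` of the dilated function `z ↦ f (ζ + r • (z - ζ))`, with the junk value
`0` where that restriction is discontinuous. -/
def dilate (L : Set E) (ζ : E) (f : E → F) (r : ℂ) : C(L, F) :=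
  ContinuousMap.mkD (fun z : L => f (ζ + r • (z - ζ))) 0

lemma dilate_apply (hf : ContinuousOn f U) {r : ℂ} (hr : r ∈ dilationParams U L ζ) (z : L) :
    dilate L ζ f r z = f (ζ + r • (z - ζ)) :=
  ContinuousMap.mkD_apply_of_continuous
    (hf.comp_continuous (by fun_prop) fun z : L => hr z z.2)

lemma continuousOn_dilate (hf : ContinuousOn f U) :
    ContinuousOn (dilate L ζ f) (dilationParams U L ζ) := by
  rw [continuousOn_iff_continuous_domRestrict]
  refine ContinuousMap.continuous_of_continuous_uncurry _ ?_
  exact (hf.comp_continuous (f := fun p : dilationParams U L ζ × L => ζ + p.1.1 • (p.2.1 - ζ))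
    (by fun_prop) fun p => p.1.2 p.2 p.2.2).congr fun p => (dilate_apply hf p.1.2 p.2).symm

end Dilation

section Runge

open MvPolynomial Metric

variable {n : ℕ}

/-- The restriction of polynomial functions to `X`, as an algebra homomorphism into `C(X, ℂ)`. -/
def mvEvalOn (X : Set (Fin n → ℂ)) : MvPolynomial (Fin n) ℂ →ₐ[ℂ] C(X, ℂ) :=
  aeval fun i => ⟨fun z => z.1 i, (continuous_apply i).comp continuous_subtype_val⟩

lemma mvEvalOn_apply (X : Set (Fin n → ℂ)) (p : MvPolynomial (Fin n) ℂ) (z : X) :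
    mvEvalOn X p z = mvEval p z := by
  have hcomp : (ContinuousMap.evalAlgHom ℂ ℂ z).comp (mvEvalOn X) = aeval z.1 := by
    ext i
    simp [mvEvalOn]
  simpa [mvEval, aeval_eq_eval] using DFunLike.congr_fun hcomp p

/-- The algebra `P(X)` of uniform limits of polynomials on `X`. -/
def uniformPolyAlgebra (X : Set (Fin n → ℂ)) [CompactSpace X] : Subalgebra ℂ C(X, ℂ) :=
  (mvEvalOn X).range.topologicalClosure

lemma isClosed_uniformPolyAlgebra (X : Set (Fin n → ℂ)) [CompactSpace X] :
    IsClosed (uniformPolyAlgebra X : Set C(X, ℂ)) :=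
  Subalgebra.isClosed_topologicalClosure _

lemma mvEvalOn_mem_uniformPolyAlgebra (X : Set (Fin n → ℂ)) [CompactSpace X]
    (p : MvPolynomial (Fin n) ℂ) : mvEvalOn X p ∈ uniformPolyAlgebra X :=
  Subalgebra.le_topologicalClosure _ ⟨p, rfl⟩

lemma exists_mvEval_dist_lt_of_mem_uniformPolyAlgebra {X : Set (Fin n → ℂ)} [CompactSpace X]
    {g : C(X, ℂ)} (hg : g ∈ uniformPolyAlgebra X) {ε : ℝ} (hε : 0 < ε) :
    ∃ p : MvPolynomial (Fin n) ℂ, ∀ z : X, dist (g z) (mvEval p z) < ε := by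
  obtain ⟨_, ⟨p, rfl⟩, hp⟩ := Metric.mem_closure_iff.1 hg ε hε
  refine ⟨p, fun z => ?_⟩
  rw [← mvEvalOn_apply]
  exact (ContinuousMap.dist_apply_le_dist z).trans_lt hp

lemma differentiableOn_pd {f : (Fin n → ℂ) → ℂ} {Ω : Set (Fin n → ℂ)} (hΩ : IsOpen Ω)
    (hf : DifferentiableOn ℂ f Ω) (i : Fin n) : DifferentiableOn ℂ (pd i f) Ω :=
  differentiableOn_fderiv_apply hΩ hf (Pi.single i 1)

lemma fderiv_apply_eq_sum_pd (f : (Fin n → ℂ) → ℂ) (z v : Fin n → ℂ) :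
    fderiv ℂ f z v = ∑ i, v i * pd i f z := by
  conv_lhs => rw [← Finset.univ_sum_single v, map_sum]
  refine Finset.sum_congr rfl fun i _ => ?_
  rw [pd, ← smul_eq_mul, ← map_smul, ← Pi.single_smul, smul_eq_mul, mul_one]

variable {Ω L : Set (Fin n → ℂ)} {ζ : Fin n → ℂ} {f : (Fin n → ℂ) → ℂ}

/-- The derivative of `r ↦ dilate L ζ f r`, that is `z ↦ ∑ i, (z i - ζ i) * ∂ᵢf (ζ + r • (z - ζ))`
on `L`. -/
def dilateDeriv (L : Set (Fin n → ℂ)) (ζ : Fin n → ℂ) (f : (Fin n → ℂ) → ℂ) (r : ℂ) : C(L, ℂ) :=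
  ∑ i, mvEvalOn L (X i - C (ζ i)) * dilate L ζ (pd i f) r

lemma dilateDeriv_apply (hΩ : IsOpen Ω) (hf : DifferentiableOn ℂ f Ω) {r : ℂ}
    (hr : r ∈ dilationParams Ω L ζ) (z : L) :
    dilateDeriv L ζ f r z = fderiv ℂ f (ζ + r • (z - ζ)) (z - ζ) := by
  rw [dilateDeriv, ContinuousMap.sum_apply, fderiv_apply_eq_sum_pd]
  refine Finset.sum_congr rfl fun i _ => ?_
  rw [ContinuousMap.mul_apply, mvEvalOn_apply,
    dilate_apply (differentiableOn_pd hΩ hf i).continuousOn hr]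
  simp [mvEval]

lemma continuousOn_dilateDeriv [CompactSpace L] (hΩ : IsOpen Ω) (hf : DifferentiableOn ℂ f Ω) :
    ContinuousOn (dilateDeriv L ζ f) (dilationParams Ω L ζ) :=
  continuousOn_finsetSum _ fun i _ =>
    continuousOn_const.mul (continuousOn_dilate (differentiableOn_pd hΩ hf i).continuousOn)

lemma hasDerivAt_dilate [CompactSpace L] (hΩ : IsOpen Ω) (hf : DifferentiableOn ℂ f Ω) {r : ℂ}
    (hr : r ∈ dilationParams Ω L ζ) : HasDerivAt (dilate L ζ f) (dilateDeriv L ζ f r) r := by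
  have hopen := isOpen_dilationParams hΩ (isCompact_iff_compactSpace.2 ‹CompactSpace L›) ζ
  refine hasDerivAt_of_forall_hasDerivAt_apply ?_
    ((continuousOn_dilateDeriv hΩ hf).continuousAt (hopen.mem_nhds hr))
  filter_upwards [hopen.mem_nhds hr] with s hs z
  have hline : HasDerivAt (fun t : ℂ => ζ + t • (z.1 - ζ)) (z.1 - ζ) s := by
    simpa using ((hasDerivAt_id s).smul_const (z.1 - ζ)).const_add ζ
  rw [dilateDeriv_apply hΩ hf hs]
  refine ((hf.differentiableAt (hΩ.mem_nhds (hs z z.2))).hasFDerivAt.comp_hasDerivAt s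
    hline).congr_of_eventuallyEq ?_
  filter_upwards [hopen.mem_nhds hs] with t ht
  exact dilate_apply hf.continuousOn ht z

lemma differentiableOn_dilate [CompactSpace L] (hΩ : IsOpen Ω) (hf : DifferentiableOn ℂ f Ω) :
    DifferentiableOn ℂ (dilate L ζ f) (dilationParams Ω L ζ) := fun _ hr =>
  (hasDerivAt_dilate hΩ hf hr).differentiableAt.differentiableWithinAt

lemma iteratedDeriv_dilate_mem_uniformPolyAlgebra [CompactSpace L] (hΩ : IsOpen Ω)
    (hf : DifferentiableOn ℂ f Ω) (hζ : ζ ∈ Ω) (k : ℕ) :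
    iteratedDeriv k (dilate L ζ f) 0 ∈ uniformPolyAlgebra L := by
  have h0 := zero_mem_dilationParams hζ L
  have hnhds : dilationParams Ω L ζ ∈ 𝓝 0 :=
    (isOpen_dilationParams hΩ (isCompact_iff_compactSpace.2 ‹CompactSpace L›) ζ).mem_nhds h0
  induction k generalizing f with
  | zero =>
    have hconst : dilate L ζ f 0 = mvEvalOn L (C (f ζ)) := by
      ext z
      rw [dilate_apply hf.continuousOn h0, mvEvalOn_apply, mvEval_C, zero_smul, add_zero]
    rw [iteratedDeriv_zero, hconst]
    exact mvEvalOn_mem_uniformPolyAlgebra L _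
  | succ k ih =>
    have hderiv : deriv (dilate L ζ f) =ᶠ[𝓝 0] dilateDeriv L ζ f := by
      filter_upwards [hnhds] with r hr using (hasDerivAt_dilate hΩ hf hr).deriv
    have hsmooth (i : Fin n) : ContDiffAt ℂ k (dilate L ζ (pd i f)) 0 :=
      ((differentiableOn_dilate hΩ (differentiableOn_pd hΩ hf i)).analyticAt hnhds).contDiffAt
    rw [iteratedDeriv_succ', hderiv.iteratedDeriv_eq, funext fun r => dilateDeriv.eq_def L ζ f r,
      iteratedDeriv_fun_sum fun i _ => contDiffAt_const.mul (hsmooth i)]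
    refine Subalgebra.sum_mem _ fun i _ => ?_
    rw [iteratedDeriv_const_mul _ (hsmooth i)]
    exact mul_mem (mvEvalOn_mem_uniformPolyAlgebra L _) (ih (differentiableOn_pd hΩ hf i))

lemma dilate_one_mem_uniformPolyAlgebra [CompactSpace L] (hΩ : IsOpen Ω) (hΩc : Convex ℝ Ω)
    (hf : DifferentiableOn ℂ f Ω) (hζ : ζ ∈ Ω) (hLΩ : L ⊆ Ω) :
    dilate L ζ f 1 ∈ uniformPolyAlgebra L :=
  mem_of_forall_iteratedDeriv_mem
    (isOpen_dilationParams hΩ (isCompact_iff_compactSpace.2 ‹CompactSpace L›) ζ)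
    (convex_dilationParams hΩc L ζ).isPreconnected (differentiableOn_dilate hΩ hf)
    (zero_mem_dilationParams hζ L) (S := Subalgebra.toSubmodule (uniformPolyAlgebra L))
    (isClosed_uniformPolyAlgebra L) (iteratedDeriv_dilate_mem_uniformPolyAlgebra hΩ hf hζ)
    (one_mem_dilationParams hLΩ ζ)

lemma exists_mvEval_dist_lt_of_convex (hΩ : IsOpen Ω) (hΩc : Convex ℝ Ω)
    (hf : DifferentiableOn ℂ f Ω) (hL : IsCompact L) (hLΩ : L ⊆ Ω) {ε : ℝ} (hε : 0 < ε) :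
    ∃ p : MvPolynomial (Fin n) ℂ, ∀ z ∈ L, dist (f z) (mvEval p z) < ε := by
  rcases L.eq_empty_or_nonempty with rfl | ⟨ζ, hζL⟩
  · exact ⟨0, by simp⟩
  have := isCompact_iff_compactSpace.1 hL
  obtain ⟨p, hp⟩ := exists_mvEval_dist_lt_of_mem_uniformPolyAlgebra
    (dilate_one_mem_uniformPolyAlgebra hΩ hΩc hf (hLΩ hζL) hLΩ) hε
  refine ⟨p, fun z hz => ?_⟩
  simpa [dilate_apply hf.continuousOn (one_mem_dilationParams hLΩ ζ)] using hp ⟨z, hz⟩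

end Runge

section Separation

lemma one_add_exp_ne_zero {w : ℂ} (hw : w.re ≠ 0) : 1 + Complex.exp w ≠ 0 := fun h => by
  have hnorm := Complex.norm_exp w
  rw [eq_neg_of_add_eq_zero_right h, norm_neg, norm_one] at hnorm
  exact hw ((Real.exp_eq_one_iff _).1 hnorm.symm)

lemma norm_inv_one_add_exp_le {w : ℂ} (hw : 0 < w.re) :
    ‖(1 + Complex.exp w)⁻¹‖ ≤ (Real.exp w.re - 1)⁻¹ := by
  rw [norm_inv]
  refine inv_anti₀ (sub_pos.2 (Real.one_lt_exp_iff.2 hw)) ?_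
  rw [← Complex.norm_exp, add_comm]
  simpa using norm_sub_le_norm_add (Complex.exp w) 1

lemma norm_inv_one_add_exp_sub_ite_le {w : ℂ} (hw : w.re ≠ 0) :
    ‖(1 + Complex.exp w)⁻¹ - if w.re < 0 then 1 else 0‖ ≤ (Real.exp |w.re| - 1)⁻¹ := by
  rcases hw.lt_or_gt with hneg | hpos
  · have hne := one_add_exp_ne_zero hw
    have hne' : Complex.exp w + 1 ≠ 0 := add_comm (1 : ℂ) _ ▸ hne
    have hreflect : (1 + Complex.exp w)⁻¹ - 1 = -(1 + Complex.exp (-w))⁻¹ := by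
      rw [Complex.exp_neg]
      field_simp
      ring
    rw [if_pos hneg, hreflect, norm_neg, abs_of_neg hneg, ← Complex.neg_re]
    exact norm_inv_one_add_exp_le (by simpa using hneg)
  · rw [if_neg hpos.not_gt, sub_zero, abs_of_pos hpos]
    exact norm_inv_one_add_exp_le hpos

lemma isUnit_one_add_exp {B : Type*} [NormedCommRing B] [NormedAlgebra ℂ B] [CompleteSpace B]
    {b : B} (hb : ∀ z ∈ spectrum ℂ b, z.re ≠ 0) : IsUnit (1 + NormedSpace.exp b) := by
  by_contra hunit
  obtain ⟨φ, hφ⟩ := WeakDual.CharacterSpace.exists_apply_eq_zero hunit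
  let _ : NormedAlgebra ℚ B := NormedAlgebra.restrictScalars ℚ ℂ B
  have hexp : φ (NormedSpace.exp b) = Complex.exp (φ b) := by
    rw [Complex.exp_eq_exp_ℂ]
    exact NormedSpace.map_exp φ (WeakDual.CharacterSpace.toCLM φ).continuous b
  rw [map_add, map_one, hexp] at hφ
  exact one_add_exp_ne_zero (hb _ (AlgHom.apply_mem_spectrum φ b)) hφ

/- The spectrum of `a` in `S` only adds bounded components of the resolvent set in `A`, and the
imaginary axis lies in the unbounded one. -/
lemma re_ne_zero_of_mem_spectrum_subalgebra {A : Type*} [NormedRing A] [NormedAlgebra ℂ A]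
    [CompleteSpace A] {S : Subalgebra ℂ A} (hS : IsClosed (S : Set A)) {a : S}
    (ha : ∀ z ∈ spectrum ℂ (a : A), z.re ≠ 0) : ∀ z ∈ spectrum ℂ a, z.re ≠ 0 := by
  intro z hz hz0
  have hline : {w : ℂ | w.re = 0} ⊆ connectedComponentIn (spectrum ℂ (a : A))ᶜ z :=
    ((convex_singleton 0).linear_preimage Complex.reLm).isPreconnected.subset_connectedComponentIn
      hz0 fun w hw hspec => ha w hspec hw
  obtain ⟨R, hR⟩ := isBounded_iff_forall_norm_le.1
    ((Subalgebra.spectrum_isBounded_connectedComponentIn S a hz).subset hline)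
  have hlarge := hR (((|R| + 1 : ℝ) : ℂ) * Complex.I) (by simp)
  rw [norm_mul, Complex.norm_I, mul_one, Complex.norm_real, Real.norm_eq_abs] at hlarge
  linarith [le_abs_self R, le_abs_self (|R| + 1)]

lemma exists_mem_forall_apply_eq_inv_one_add_exp {X : Type*} [TopologicalSpace X] [CompactSpace X]
    {A : Subalgebra ℂ C(X, ℂ)} (hA : IsClosed (A : Set C(X, ℂ))) {h : C(X, ℂ)} (hh : h ∈ A)
    (hre : ∀ x, (h x).re ≠ 0) : ∃ b ∈ A, ∀ x, b x = (1 + Complex.exp (h x))⁻¹ := by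
  have := hA.completeSpace_coe
  have hspec : ∀ z ∈ spectrum ℂ h, z.re ≠ 0 := by
    rw [ContinuousMap.spectrum_eq_range]
    exact forall_mem_range.2 hre
  obtain ⟨b, hb⟩ := (isUnit_one_add_exp
    (re_ne_zero_of_mem_spectrum_subalgebra hA (a := ⟨h, hh⟩) hspec)).exists_left_inv
  refine ⟨b, b.2, fun x => ?_⟩
  let _ : NormedAlgebra ℚ A := NormedAlgebra.restrictScalars ℚ ℂ A
  let evalAt : A →ₐ[ℂ] ℂ := (ContinuousMap.evalAlgHom ℂ ℂ x).comp A.val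
  have hexp : evalAt (NormedSpace.exp ⟨h, hh⟩) = Complex.exp (h x) := by
    rw [Complex.exp_eq_exp_ℂ]
    exact NormedSpace.map_exp evalAt ((continuous_eval_const x).comp continuous_subtype_val) _
  have hmul := congrArg evalAt hb
  rw [map_mul, map_add, map_one, hexp] at hmul
  exact eq_inv_of_mul_eq_one_left hmul

lemma exists_mem_forall_norm_sub_ite_lt {X : Type*} [TopologicalSpace X] [CompactSpace X]
    {A : Subalgebra ℂ C(X, ℂ)} (hA : IsClosed (A : Set C(X, ℂ))) {h : C(X, ℂ)} (hh : h ∈ A)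
    (hre : ∀ x, (h x).re ≠ 0) {ε : ℝ} (hε : 0 < ε) :
    ∃ b ∈ A, ∀ x, ‖b x - if (h x).re < 0 then 1 else 0‖ < ε := by
  obtain ⟨δ, hδ, hδh⟩ : ∃ δ > 0, ∀ x, δ ≤ |(h x).re| := by
    obtain ⟨δ, hδ, hδh⟩ := isCompact_univ.exists_forall_le' (f := fun x => |(h x).re|) (a := 0)
      (by fun_prop) fun x _ => abs_pos.2 (hre x)
    exact ⟨δ, hδ, fun x => hδh x (mem_univ x)⟩
  have hdecay : Tendsto (fun N : ℕ => (Real.exp (N * δ) - 1)⁻¹) atTop (𝓝 0) :=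
    (tendsto_atTop_add_const_right _ (-1) (Real.tendsto_exp_atTop.comp
      (tendsto_natCast_atTop_atTop.atTop_mul_const hδ))).inv_tendsto_atTop
  obtain ⟨N, hNε, hN⟩ := ((hdecay.eventually_lt_const hε).and (eventually_gt_atTop 0)).exists
  have hN' : (0 : ℝ) < N := by exact_mod_cast hN
  have hre_smul (x : X) : (((N : ℂ) • h) x).re = N * (h x).re := by simp
  obtain ⟨b, hbA, hb⟩ := exists_mem_forall_apply_eq_inv_one_add_exp hA (A.smul_mem hh (N : ℂ))
    fun x => by rw [hre_smul]; exact mul_ne_zero hN'.ne' (hre x)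
  refine ⟨b, hbA, fun x => ?_⟩
  have hbound := norm_inv_one_add_exp_sub_ite_le (w := ((N : ℂ) • h) x)
    (by rw [hre_smul]; exact mul_ne_zero hN'.ne' (hre x))
  rw [← hb, hre_smul, abs_mul, abs_of_pos hN'] at hbound
  have hsign : N * (h x).re < 0 ↔ (h x).re < 0 := by simp [mul_neg_iff, hN', hN'.not_gt]
  simp only [hsign] at hbound
  refine hbound.trans_lt (lt_of_le_of_lt (inv_anti₀ ?_ ?_) hNε)
  · exact sub_pos.2 (Real.one_lt_exp_iff.2 (by positivity))
  · gcongr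
    exact hδh x

open MvPolynomial

variable {n : ℕ}

lemma exists_mvEval_eq_sub (ℓ : (Fin n → ℂ) →L[ℂ] ℂ) (c : ℂ) :
    ∃ p : MvPolynomial (Fin n) ℂ, ∀ z, mvEval p z = ℓ z - c := by
  refine ⟨∑ i, C (ℓ fun j => if i = j then 1 else 0) * X i - C c, fun z => ?_⟩
  have hz := ℓ.toLinearMap.pi_apply_eq_sum_univ z
  simp_all [mvEval, mul_comm]

variable {L K : Set (Fin n → ℂ)}

lemma exists_mvEval_norm_lt_of_re_separated (hL : IsCompact L) (hK : IsCompact K)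
    {h : MvPolynomial (Fin n) ℂ} (hhL : ∀ z ∈ L, (mvEval h z).re < 0)
    (hhK : ∀ z ∈ K, 0 < (mvEval h z).re) {ε : ℝ} (hε : 0 < ε) :
    ∃ s : MvPolynomial (Fin n) ℂ, (∀ z ∈ L, ‖mvEval s z - 1‖ < ε) ∧ ∀ z ∈ K, ‖mvEval s z‖ < ε := by
  have := isCompact_iff_compactSpace.1 (hL.union hK)
  have hre (z : ↑(L ∪ K)) : (mvEvalOn (L ∪ K) h z).re ≠ 0 := by
    rw [mvEvalOn_apply]
    exact z.2.elim (fun hz => (hhL _ hz).ne) fun hz => (hhK _ hz).ne'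
  obtain ⟨b, hbmem, hb⟩ := exists_mem_forall_norm_sub_ite_lt (isClosed_uniformPolyAlgebra (L ∪ K))
    (mvEvalOn_mem_uniformPolyAlgebra (L ∪ K) h) hre (half_pos hε)
  obtain ⟨s, hs⟩ := exists_mvEval_dist_lt_of_mem_uniformPolyAlgebra hbmem (half_pos hε)
  have hsum (z : ↑(L ∪ K)) : ‖mvEval s z - if (mvEval h z).re < 0 then 1 else 0‖ < ε := by
    rw [← dist_eq_norm]
    have hbz := hb z
    rw [mvEvalOn_apply, ← dist_eq_norm] at hbz
    exact (dist_triangle_left _ _ (b z)).trans_lt (by linarith [hs z])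
  refine ⟨s, fun z hz => ?_, fun z hz => ?_⟩
  · simpa only [if_pos (hhL z hz)] using hsum ⟨z, .inl hz⟩
  · simpa only [if_neg (hhK z hz).not_gt, sub_zero] using hsum ⟨z, .inr hz⟩

lemma exists_mvEval_dist_lt_of_re_separated (hL : IsCompact L) (hK : IsCompact K)
    {h : MvPolynomial (Fin n) ℂ} (hhL : ∀ z ∈ L, (mvEval h z).re < 0)
    (hhK : ∀ z ∈ K, 0 < (mvEval h z).re) (q p : MvPolynomial (Fin n) ℂ) {ε : ℝ} (hε : 0 < ε) :
    ∃ Q : MvPolynomial (Fin n) ℂ, (∀ z ∈ L, dist (mvEval Q z) (mvEval q z) < ε) ∧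
      ∀ z ∈ K, dist (mvEval Q z) (mvEval p z) < ε := by
  obtain ⟨M, hM⟩ := (hL.union hK).exists_bound_of_continuousOn
    (differentiable_mvEval (q - p)).continuous.continuousOn
  obtain ⟨s, hsL, hsK⟩ := exists_mvEval_norm_lt_of_re_separated hL hK hhL hhK
    (show 0 < ε / (|M| + 1) by positivity)
  have hmul {a : ℂ} {z : Fin n → ℂ} (ha : ‖a‖ < ε / (|M| + 1)) (hz : z ∈ L ∪ K) :
      ‖a * mvEval (q - p) z‖ < ε := by
    rw [lt_div_iff₀ (by positivity)] at ha
    calc ‖a * mvEval (q - p) z‖ ≤ ‖a‖ * (|M| + 1) := by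
          rw [norm_mul]
          gcongr
          linarith [hM z hz, le_abs_self M]
      _ < ε := ha
  refine ⟨p + s * (q - p), fun z hz => ?_, fun z hz => ?_⟩
  · have hdiff : mvEval (p + s * (q - p)) z - mvEval q z = (mvEval s z - 1) * mvEval (q - p) z := by
      simp only [mvEval, map_add, map_mul, map_sub]
      ring
    rw [dist_eq_norm, hdiff]
    exact hmul (hsL z hz) (.inl hz)
  · have hdiff : mvEval (p + s * (q - p)) z - mvEval p z = mvEval s z * mvEval (q - p) z := by
      simp [mvEval]
    rw [dist_eq_norm, hdiff]
    exact hmul (hsK z hz) (.inr hz)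

lemma exists_re_lt_of_convex_of_disjoint {E : Type*} [NormedAddCommGroup E] [NormedSpace ℂ E]
    {U L K : Set E} (hU : IsOpen U) (hUc : Convex ℝ U) (hL : IsCompact L) (hLU : L ⊆ U)
    (hKc : Convex ℝ K) (hUK : Disjoint U K) :
    ∃ (ℓ : E →L[ℂ] ℂ) (c : ℝ), (∀ z ∈ L, (ℓ z).re < c) ∧ ∀ z ∈ K, c < (ℓ z).re := by
  obtain ⟨ℓ, u, hℓU, hℓK⟩ := RCLike.geometric_hahn_banach_open (𝕜 := ℂ) hUc hU hKc hUK
  simp only [RCLike.re_eq_complex_re] at hℓU hℓK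
  obtain ⟨δ, hδ, hδL⟩ := hL.exists_forall_le' (f := fun z => u - (ℓ z).re) (a := 0) (by fun_prop)
    fun z hz => sub_pos.2 (hℓU z (hLU hz))
  exact ⟨ℓ, u - δ / 2, fun z hz => by linarith [hδL z hz], fun z hz => by linarith [hℓK z hz]⟩

lemma exists_mvEval_dist_lt_of_convex_of_disjoint {Ω : Set (Fin n → ℂ)} {f : (Fin n → ℂ) → ℂ}
    (hΩ : IsOpen Ω) (hΩc : Convex ℝ Ω) (hf : DifferentiableOn ℂ f Ω) (hL : IsCompact L)
    (hLΩ : L ⊆ Ω) (hK : IsCompact K) (hKc : Convex ℝ K) (hΩK : Disjoint Ω K)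
    (p : MvPolynomial (Fin n) ℂ) {ε : ℝ} (hε : 0 < ε) :
    ∃ Q : MvPolynomial (Fin n) ℂ, (∀ z ∈ L, dist (f z) (mvEval Q z) < ε) ∧
      ∀ z ∈ K, dist (mvEval p z) (mvEval Q z) < ε := by
  obtain ⟨q, hq⟩ := exists_mvEval_dist_lt_of_convex hΩ hΩc hf hL hLΩ (half_pos hε)
  obtain ⟨ℓ, c, hℓL, hℓK⟩ := exists_re_lt_of_convex_of_disjoint hΩ hΩc hL hLΩ hKc hΩK
  obtain ⟨h, hh⟩ := exists_mvEval_eq_sub ℓ c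
  obtain ⟨Q, hQL, hQK⟩ := exists_mvEval_dist_lt_of_re_separated hL hK (h := h)
    (by simpa [hh] using hℓL) (by simpa [hh] using hℓK) q p (half_pos hε)
  refine ⟨Q, fun z hz => ?_, fun z hz => ?_⟩
  · exact (dist_triangle_right _ _ (mvEval q z)).trans_lt (by linarith [hq z hz, hQL z hz])
  · exact (dist_comm _ _).trans_lt ((hQK z hz).trans (half_lt_self hε))

end Separation

section HolomorphicFunctionSpace

namespace Ospace

variable {n : ℕ} {Ω : Set (Fin n → ℂ)} {ζ : Fin n → ℂ}

/-- The restriction map `O(Ω) → C(Ω, ℂ)` inducing the topology. It is not injective, since elements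
of `Ospace n Ω` also carry values outside `Ω`. -/
def toContinuousMap (f : Ospace n Ω) : C(Ω, ℂ) :=
  ⟨Ω.domRestrict f.1, f.2.continuousOn.domRestrict⟩

lemma isInducing_toContinuousMap : IsInducing (toContinuousMap : Ospace n Ω → C(Ω, ℂ)) := ⟨rfl⟩

lemma tendsto_iff_tendstoLocallyUniformlyOn (hΩ : IsOpen Ω) {ι : Type*} {l : Filter ι}
    {Φ : ι → Ospace n Ω} {f : Ospace n Ω} :
    Tendsto Φ l (𝓝 f) ↔ TendstoLocallyUniformlyOn (fun i => (Φ i).1) f.1 l Ω := by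
  have := hΩ.locallyCompactSpace
  rw [isInducing_toContinuousMap.tendsto_nhds_iff,
    ContinuousMap.tendsto_iff_tendstoLocallyUniformly,
    tendstoLocallyUniformlyOn_iff_tendstoLocallyUniformly_comp_coe]
  rfl

lemma continuousAt_eval (hΩ : IsOpen Ω) (f : Ospace n Ω) (hζ : ζ ∈ Ω) :
    ContinuousAt (fun p : Ospace n Ω × (Fin n → ℂ) => p.1.1 p.2) (f, ζ) := by
  have hfst := (tendsto_iff_tendstoLocallyUniformlyOn hΩ).1 (continuousAt_fst (p := (f, ζ)))
  refine hfst.tendsto_comp (f.2.continuousOn ζ hζ) hζ ?_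
  rw [hΩ.nhdsWithin_eq hζ]
  exact continuousAt_snd

lemma range_toContinuousMap : range (toContinuousMap : Ospace n Ω → C(Ω, ℂ)) =
    {g : C(Ω, ℂ) | DifferentiableOn ℂ (Function.extend Subtype.val g 0) Ω} := by
  ext g
  refine ⟨?_, fun hg => ⟨⟨_, hg⟩, ?_⟩⟩
  · rintro ⟨f, rfl⟩
    exact f.2.congr fun z hz => Subtype.val_injective.extend_apply _ _ (⟨z, hz⟩ : Ω)
  · ext z
    exact Subtype.val_injective.extend_apply _ _ z

lemma isClosed_range_toContinuousMap (hΩ : IsOpen Ω) :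
    IsClosed (range (toContinuousMap : Ospace n Ω → C(Ω, ℂ))) := by
  have := hΩ.locallyCompactSpace
  rw [range_toContinuousMap]
  refine isClosed_of_closure_subset fun g hg => ?_
  have := mem_closure_iff_nhdsWithin_neBot.1 hg
  refine differentiableOn_of_tendstoLocallyUniformlyOn hΩ
    (l := 𝓝[{g : C(Ω, ℂ) | DifferentiableOn ℂ (Function.extend Subtype.val g 0) Ω}] g)
    (Φ := fun h : C(Ω, ℂ) => Function.extend Subtype.val h 0) self_mem_nhdsWithin ?_
  rw [tendstoLocallyUniformlyOn_iff_tendstoLocallyUniformly_comp_coe]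
  have hid := ContinuousMap.tendsto_iff_tendstoLocallyUniformly.1 (tendsto_id.mono_left
    (nhdsWithin_le_nhds (a := g)
      (s := {g : C(Ω, ℂ) | DifferentiableOn ℂ (Function.extend Subtype.val g 0) Ω})))
  simpa [Function.comp_def, Subtype.val_injective.extend_apply] using hid

lemma baireSpace (hΩ : IsOpen Ω) : BaireSpace (Ospace n Ω) := by
  have := hΩ.locallyCompactSpace
  let _ : UniformSpace (Ospace n Ω) := UniformSpace.comap toContinuousMap inferInstance
  have hind : IsUniformInducing (toContinuousMap : Ospace n Ω → C(Ω, ℂ)) := ⟨rfl⟩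
  have : (uniformity (Ospace n Ω)).IsCountablyGenerated := by
    rw [← hind.comap_uniformity]
    infer_instance
  have : CompleteSpace (Ospace n Ω) :=
    (completeSpace_iff_isComplete_range hind).2 (isClosed_range_toContinuousMap hΩ).isComplete
  have : TopologicalSpace.IsCompletelyPseudoMetrizableSpace (Ospace n Ω) :=
    .of_completeSpace_pseudometrizable
  infer_instance

/-- The operator `∂ᵢ` on `O(Ω)`. -/
def partialDeriv (hΩ : IsOpen Ω) (i : Fin n) (f : Ospace n Ω) : Ospace n Ω :=
  ⟨pd i f.1, differentiableOn_pd hΩ f.2 i⟩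

lemma continuous_partialDeriv (hΩ : IsOpen Ω) (i : Fin n) :
    Continuous (partialDeriv (Ω := Ω) hΩ i) := by
  refine continuous_iff_continuousAt.2 fun f =>
    (tendsto_iff_tendstoLocallyUniformlyOn hΩ).2 ?_
  have hderiv := tendstoLocallyUniformlyOn_fderiv hΩ
    (Eventually.of_forall fun g : Ospace n Ω => g.2) f.2
    ((tendsto_iff_tendstoLocallyUniformlyOn hΩ).1 tendsto_id)
  exact (ContinuousLinearMap.apply ℂ ℂ
    (Pi.single i 1)).uniformContinuous.comp_tendstoLocallyUniformlyOn hderiv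

/-- The operator `D^ℓ` on `O(Ω)`. -/
def multiDeriv (hΩ : IsOpen Ω) (ℓ : Fin n → ℕ) (f : Ospace n Ω) : Ospace n Ω :=
  (List.finRange n).foldr (fun i g => (partialDeriv hΩ i)^[ℓ i] g) f

lemma multiDeriv_val (hΩ : IsOpen Ω) (ℓ : Fin n → ℕ) (f : Ospace n Ω) :
    (multiDeriv hΩ ℓ f).1 = Dml ℓ f.1 := by
  have hsemi (i : Fin n) : Function.Semiconj Subtype.val (partialDeriv (Ω := Ω) hΩ i) (pd i) :=
    fun _ => rfl
  exact (List.foldr_hom Subtype.val fun i g => ((hsemi i).iterate_right (ℓ i) g).symm).symm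

lemma continuous_multiDeriv (hΩ : IsOpen Ω) (ℓ : Fin n → ℕ) :
    Continuous (multiDeriv (Ω := Ω) hΩ ℓ) := by
  unfold multiDeriv
  induction List.finRange n with
  | nil => exact continuous_id
  | cons i is ih => exact ((continuous_partialDeriv hΩ i).iterate (ℓ i)).comp ih

lemma continuous_Dml_apply (hΩ : IsOpen Ω) (hζ : ζ ∈ Ω) (ℓ : Fin n → ℕ) :
    Continuous fun f : Ospace n Ω => Dml ℓ f.1 ζ := by
  simp only [← multiDeriv_val hΩ]
  exact ((continuous_eval_const (⟨ζ, hζ⟩ : Ω)).comp isInducing_toContinuousMap.continuous).comp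
    (continuous_multiDeriv hΩ ℓ)

lemma continuous_pSum (hΩ : IsOpen Ω) (hζ : ζ ∈ Ω) (Nj : ℕ → Fin n → ℕ) (k : ℕ) :
    Continuous fun p : Ospace n Ω × (Fin n → ℂ) => pSum Nj p.1.1 ζ k p.2 := by
  unfold pSum pSumExt
  have hcoeff (j : ℕ) := (continuous_Dml_apply hΩ hζ (Nj j)).comp
    (continuous_fst (X := Ospace n Ω) (Y := Fin n → ℂ))
  exact continuous_finsetSum _ fun j _ =>
    (continuous_const.mul (hcoeff j)).mul (by fun_prop)

/-- A polynomial as an element of `O(Ω)`. -/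
def ofMvPolynomial (Ω : Set (Fin n → ℂ)) (p : MvPolynomial (Fin n) ℂ) : Ospace n Ω :=
  ⟨mvEval p, (differentiable_mvEval p).differentiableOn⟩

end Ospace

end HolomorphicFunctionSpace

section UniversalTaylorSeries

lemma tendstoUniformlyOn_of_forall_dist_lt {α β ι : Type*} [PseudoMetricSpace β] {l : Filter ι}
    {F : ι → α → β} {f : α → β} {s : Set α} {δ : ι → ℝ} (hδ : Tendsto δ l (𝓝 0))
    (hF : ∀ᶠ i in l, ∀ x ∈ s, dist (f x) (F i x) < δ i) : TendstoUniformlyOn F f l s :=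
  Metric.tendstoUniformlyOn_iff.2 fun _ hε => by
    filter_upwards [hF, hδ.eventually_lt_const hε] with i hi hδi x hx
    exact (hi x hx).trans hδi

lemma tendstoUniformlyOn_of_compactExhaustion {α β : Type*} [TopologicalSpace α]
    [PseudoMetricSpace β] {s : Set α} (E : CompactExhaustion s) {F : ℕ → α → β} {f : α → β}
    {δ : ℕ → ℝ} (hδ : Tendsto δ atTop (𝓝 0))
    (hF : ∀ m, ∀ x ∈ Subtype.val '' E m, dist (f x) (F m x) < δ m) {C : Set α} (hCs : C ⊆ s)
    (hC : IsCompact C) : TendstoUniformlyOn F f atTop C := by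
  obtain ⟨m, hm⟩ := E.exists_superset_of_isCompact
    (IsInducing.subtypeVal.isCompact_preimage_iff (by simpa using hCs) |>.2 hC)
  refine tendstoUniformlyOn_of_forall_dist_lt hδ ?_
  filter_upwards [eventually_ge_atTop m] with j hj x hx
  exact hF j x ⟨⟨x, hCs hx⟩, E.subset hj (hm hx), rfl⟩

variable {n : ℕ} {Ω K L : Set (Fin n → ℂ)} {ζ : Fin n → ℂ} {Nj : ℕ → Fin n → ℕ} {𝕄 : Set ℕ}

lemma exists_seq_mvEval_dist_lt (hK : IsCompact K) :
    ∃ p : ℕ → MvPolynomial (Fin n) ℂ, ∀ P : MvPolynomial (Fin n) ℂ, ∀ ε > 0,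
      ∃ k, ∀ z ∈ K, dist (mvEval P z) (mvEval (p k) z) < ε := by
  have := isCompact_iff_compactSpace.1 hK
  let S : Set C(K, ℂ) := range (mvEvalOn K)
  have hne : Nonempty S := ⟨⟨mvEvalOn K 0, mem_range_self 0⟩⟩
  choose p hp using fun k => (TopologicalSpace.denseSeq S k).2
  refine ⟨p, fun P ε hε => ?_⟩
  obtain ⟨k, hk⟩ := (TopologicalSpace.denseRange_denseSeq S).exists_dist_lt
    ⟨mvEvalOn K P, mem_range_self P⟩ hε
  rw [Subtype.dist_eq, ← hp k, ContinuousMap.dist_lt_iff hε] at hk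
  exact ⟨k, fun z hz => by simpa only [mvEvalOn_apply] using hk ⟨z, hz⟩⟩

lemma exists_seq_tendsto_ofMvPolynomial (hΩ : IsOpen Ω) (hΩc : Convex ℝ Ω) (hK : IsCompact K)
    (hKc : Convex ℝ K) (hΩK : Disjoint Ω K) (f : Ospace n Ω) (p : MvPolynomial (Fin n) ℂ) {ε : ℝ}
    (hε : 0 < ε) :
    ∃ Q : ℕ → MvPolynomial (Fin n) ℂ,
      Tendsto (fun j => Ospace.ofMvPolynomial Ω (Q j)) atTop (𝓝 f) ∧
        ∀ j, ∀ z ∈ K, dist (mvEval p z) (mvEval (Q j) z) < ε := by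
  have := hΩ.locallyCompactSpace
  let E := CompactExhaustion.choice Ω
  have happrox (j : ℕ) := exists_mvEval_dist_lt_of_convex_of_disjoint hΩ hΩc f.2
    ((E.isCompact j).image continuous_subtype_val) (Subtype.coe_image_subset Ω (E j)) hK hKc hΩK p
    (lt_min hε (Nat.one_div_pos_of_nat (α := ℝ) (n := j)))
  choose Q hQf hQp using happrox
  refine ⟨Q, ?_, fun j z hz => (hQp j z hz).trans_le (min_le_left _ _)⟩
  rw [Ospace.tendsto_iff_tendstoLocallyUniformlyOn hΩ,
    tendstoLocallyUniformlyOn_iff_forall_isCompact hΩ]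
  exact fun C hCΩ hC => tendstoUniformlyOn_of_compactExhaustion E
    tendsto_one_div_add_atTop_nhds_zero_nat
    (fun j z hz => (hQf j z hz).trans_le (min_le_right _ _)) hCΩ hC

/-- The functions `f ∈ O(Ω)` whose partial sum `S_k(f, ζ)` is `ε`-close to the polynomial `P` on `K`
and to `f` itself on `L`. -/
def taylorApproxSet (Ω : Set (Fin n → ℂ)) (Nj : ℕ → Fin n → ℕ) (ζ : Fin n → ℂ)
    (K L : Set (Fin n → ℂ)) (P : MvPolynomial (Fin n) ℂ) (ε : ℝ) (k : ℕ) : Set (Ospace n Ω) :=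
  {f | (∀ z ∈ K, dist (mvEval P z) (pSum Nj f.1 ζ k z) < ε) ∧
    ∀ z ∈ L, dist (f.1 z) (pSum Nj f.1 ζ k z) < ε}

lemma isOpen_taylorApproxSet (hΩ : IsOpen Ω) (hζ : ζ ∈ Ω) (hK : IsCompact K) (hL : IsCompact L)
    (hLΩ : L ⊆ Ω) (P : MvPolynomial (Fin n) ℂ) (ε : ℝ) (k : ℕ) :
    IsOpen (taylorApproxSet Ω Nj ζ K L P ε k) := by
  refine isOpen_iff_eventually.2 fun f ⟨hfK, hfL⟩ => ?_
  have hsum := Ospace.continuous_pSum hΩ hζ Nj k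
  have hP := (differentiable_mvEval P).continuous.comp (continuous_snd (X := Ospace n Ω))
  refine (hK.eventually_forall_of_forall_eventually fun z hz => ?_).and
    (hL.eventually_forall_of_forall_eventually fun z hz => ?_)
  · exact (hP.dist hsum).continuousAt.eventually_lt_const (hfK z hz)
  · exact ((Ospace.continuousAt_eval hΩ f (hLΩ hz)).dist hsum.continuousAt).eventually_lt_const
      (hfL z hz)

/-- Polynomials are eventually equal to their partial sums, so it suffices to approximate `f` in
`O(Ω)` by polynomials close to `P` on `K`. -/
lemma dense_iUnion_taylorApproxSet (h𝕄 : 𝕄.Infinite) (hΩ : IsOpen Ω) (hΩc : Convex ℝ Ω)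
    (hK : IsCompact K) (hKc : Convex ℝ K) (hΩK : Disjoint Ω K) (hNj : Function.Bijective Nj)
    (ζ : Fin n → ℂ) (L : Set (Fin n → ℂ)) (P : MvPolynomial (Fin n) ℂ) {ε : ℝ} (hε : 0 < ε) :
    Dense (⋃ k ∈ 𝕄, taylorApproxSet Ω Nj ζ K L P ε k) := by
  intro f
  obtain ⟨Q, hQf, hQP⟩ := exists_seq_tendsto_ofMvPolynomial hΩ hΩc hK hKc hΩK f P hε
  refine mem_closure_of_tendsto hQf (Eventually.of_forall fun j => ?_)
  obtain ⟨k, hk, hsum⟩ := ((Nat.frequently_atTop_iff_infinite.2 h𝕄).and_eventually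
    (eventually_pSum_mvEval_eq hNj (Q j) ζ)).exists
  refine mem_iUnion₂.2 ⟨k, hk, fun z hz => ?_, fun z _ => ?_⟩ <;>
    simp only [Ospace.ofMvPolynomial, hsum]
  · exact hQP j z hz
  · rwa [dist_self]

/-- The functions `f ∈ O(Ω)` whose Taylor partial sums at `ζ` with indices in `𝕄` approximate every
polynomial uniformly on `K` while converging to `f` in `O(Ω)`. -/
def universalTaylorSet (Ω : Set (Fin n → ℂ)) (𝕄 : Set ℕ) (Nj : ℕ → Fin n → ℕ) (ζ : Fin n → ℂ)
    (K : Set (Fin n → ℂ)) : Set (Ospace n Ω) :=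
  {f | ∀ P : MvPolynomial (Fin n) ℂ, ∃ lam : ℕ → ℕ, (∀ N, lam N ∈ 𝕄) ∧
    TendstoUniformlyOn (fun N => pSum Nj f.1 ζ (lam N)) (mvEval P) atTop K ∧
    ∀ L : Set (Fin n → ℂ), L ⊆ Ω → IsCompact L →
      TendstoUniformlyOn (fun N => pSum Nj f.1 ζ (lam N)) f.1 atTop L}

lemma universalTaylorSet_subset_iUnion_taylorApproxSet (hL : IsCompact L) (hLΩ : L ⊆ Ω)
    (P : MvPolynomial (Fin n) ℂ) {ε : ℝ} (hε : 0 < ε) :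
    universalTaylorSet Ω 𝕄 Nj ζ K ⊆ ⋃ k ∈ 𝕄, taylorApproxSet Ω Nj ζ K L P ε k := by
  intro f hf
  obtain ⟨lam, hlam, hP, hf⟩ := hf P
  obtain ⟨N, hN⟩ := ((Metric.tendstoUniformlyOn_iff.1 hP ε hε).and
    (Metric.tendstoUniformlyOn_iff.1 (hf L hLΩ hL) ε hε)).exists
  exact mem_iUnion₂.2 ⟨lam N, hlam N, hN⟩

lemma mem_universalTaylorSet_of_forall_mem_taylorApproxSet (E : CompactExhaustion Ω)
    {p : ℕ → MvPolynomial (Fin n) ℂ} (hp : ∀ P : MvPolynomial (Fin n) ℂ, ∀ ε > 0,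
      ∃ k, ∀ z ∈ K, dist (mvEval P z) (mvEval (p k) z) < ε)
    {f : Ospace n Ω} (hf : ∀ i m : ℕ, ∃ k ∈ 𝕄,
      f ∈ taylorApproxSet Ω Nj ζ K (Subtype.val '' E m) (p i) (1 / ((m : ℝ) + 1)) k) :
    f ∈ universalTaylorSet Ω 𝕄 Nj ζ K := by
  intro P
  choose i hi using fun N : ℕ => hp P (1 / ((N : ℝ) + 1)) Nat.one_div_pos_of_nat
  choose lam hlam hsum using fun N : ℕ => hf (i N) N
  have hδ := tendsto_one_div_add_atTop_nhds_zero_nat (𝕜 := ℝ)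
  refine ⟨lam, hlam, ?_, fun C hCΩ hC =>
    tendstoUniformlyOn_of_compactExhaustion E hδ (fun N => (hsum N).2) hCΩ hC⟩
  refine tendstoUniformlyOn_of_forall_dist_lt (by simpa only [add_zero] using hδ.add hδ)
    (Eventually.of_forall fun N z hz => ?_)
  exact (dist_triangle _ _ _).trans_lt (add_lt_add (hi N z hz) ((hsum N).1 z hz))

lemma universalTaylorSet_eq_iInter (E : CompactExhaustion Ω)
    {p : ℕ → MvPolynomial (Fin n) ℂ} (hp : ∀ P : MvPolynomial (Fin n) ℂ, ∀ ε > 0,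
      ∃ k, ∀ z ∈ K, dist (mvEval P z) (mvEval (p k) z) < ε) :
    universalTaylorSet Ω 𝕄 Nj ζ K = ⋂ q : ℕ × ℕ, ⋃ k ∈ 𝕄,
      taylorApproxSet Ω Nj ζ K (Subtype.val '' E q.2) (p q.1) (1 / ((q.2 : ℝ) + 1)) k := by
  refine Subset.antisymm (subset_iInter fun q =>
    universalTaylorSet_subset_iUnion_taylorApproxSet
      ((E.isCompact q.2).image continuous_subtype_val) (Subtype.coe_image_subset Ω _) _
      Nat.one_div_pos_of_nat) fun f hf =>
    mem_universalTaylorSet_of_forall_mem_taylorApproxSet E hp fun i m => ?_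
  simpa only [mem_iUnion₂, exists_prop] using mem_iInter.1 hf (i, m)

end UniversalTaylorSeries

/-- Proposition 2.3: universal Taylor series in `O(Ω)` with respect to a
fixed compact convex set `K` disjoint from `Ω`; the set of universal functions is a
nonempty dense `G_δ` subset of `O(Ω)`. -/
theorem prop2_3 (n : ℕ) (𝕄 : Set ℕ) (h𝕄 : 𝕄.Infinite)
    (Ω : Set (Fin n → ℂ)) (hΩo : IsOpen Ω) (hΩcv : Convex ℝ Ω)
    (ζ : Fin n → ℂ) (hζ : ζ ∈ Ω)
    (K : Set (Fin n → ℂ)) (hKcpt : IsCompact K) (hKcv : Convex ℝ K) (hKΩ : K ∩ Ω = ∅)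
    (Nj : ℕ → Fin n → ℕ) (hNj : Function.Bijective Nj) :
    ∃ U : Set (Ospace n Ω),
      U = {f : Ospace n Ω |
        ∀ P : MvPolynomial (Fin n) ℂ, ∃ lam : ℕ → ℕ, (∀ N, lam N ∈ 𝕄) ∧
          TendstoUniformlyOn (fun N => pSum Nj f.1 ζ (lam N)) (mvEval P) atTop K ∧
          ∀ L : Set (Fin n → ℂ), L ⊆ Ω → IsCompact L →
            TendstoUniformlyOn (fun N => pSum Nj f.1 ζ (lam N)) f.1 atTop L} ∧
      U.Nonempty ∧ Dense U ∧ IsGδ U := by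
  have := hΩo.locallyCompactSpace
  have := Ospace.baireSpace hΩo
  have : Nonempty (Ospace n Ω) := ⟨Ospace.ofMvPolynomial Ω 0⟩
  have hΩK : Disjoint Ω K := (disjoint_iff_inter_eq_empty.2 hKΩ).symm
  obtain ⟨p, hp⟩ := exists_seq_mvEval_dist_lt hKcpt
  have hU := universalTaylorSet_eq_iInter (𝕄 := 𝕄) (Nj := Nj) (ζ := ζ)
    (CompactExhaustion.choice Ω) hp
  have hopen (q : ℕ × ℕ) := isOpen_biUnion fun k (_ : k ∈ 𝕄) =>
    isOpen_taylorApproxSet (Nj := Nj) hΩo hζ hKcpt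
      (((CompactExhaustion.choice Ω).isCompact q.2).image continuous_subtype_val)
      (Subtype.coe_image_subset Ω _) (p q.1) (1 / ((q.2 : ℝ) + 1)) k
  have hdense : Dense (universalTaylorSet Ω 𝕄 Nj ζ K) := hU ▸ dense_iInter_of_isOpen hopen
    fun q => dense_iUnion_taylorApproxSet h𝕄 hΩo hΩcv hKcpt hKcv hΩK hNj ζ _ _
      Nat.one_div_pos_of_nat
  exact ⟨universalTaylorSet Ω 𝕄 Nj ζ K, rfl, hdense.nonempty, hdense,
    hU ▸ .iInter fun q => (hopen q).isGδ⟩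

end
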